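/- Let α = (1 2)(3 4 5)(6 7 8 9 10) ∈ Σ_10 and let G be any transitive subgroup of Σ_10 containing α. If A ⊆ {1,…,10} is a block for G with 2 ≤ |A| ≤ 9, then A = {1, 2, 3, 4, 5} or A = {6, 7, 8, 9, 10}. -/

import Mathlib

/-- `A` is a block for the subgroup `G` of permutations of `Fin d`:
for every `γ ∈ G`, either `γA = A` or `γA ∩ A = ∅`. -/
def IsBlockFor {d : ℕ} (G : Subgroup (Equiv.Perm (Fin d))) (A : Set (Fin d)) : Prop :=
  ∀ g ∈ G, g '' A = A ∨ (g '' A) ∩ A = ∅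

/-- The subgroup `G` of permutations of `Fin d` is transitive. -/
def IsTransitiveSub {d : ℕ} (G : Subgroup (Equiv.Perm (Fin d))) : Prop :=
  ∀ i j : Fin d, ∃ g ∈ G, g i = j

/-- The subgroup `G` of permutations of `Fin d` is primitive: it is transitive and its
only blocks are `∅`, singletons and the whole set. -/
def IsPrimitiveSub {d : ℕ} (G : Subgroup (Equiv.Perm (Fin d))) : Prop :=
  IsTransitiveSub G ∧
    ∀ A : Set (Fin d), IsBlockFor G A → A = ∅ ∨ (∃ a, A = {a}) ∨ A = Set.univ

/-- `S 1, …, S l` are the supports of the disjoint cycles of `α` (counting each fixed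
point as a cycle of length 1), i.e. the `S i` are exactly the orbits of `⟨α⟩`, each
listed exactly once, and they partition `Fin d`. -/
def IsCycleDecompOn {d l : ℕ} (α : Equiv.Perm (Fin d)) (S : Fin l → Set (Fin d)) : Prop :=
  (∀ x : Fin d, ∃! i : Fin l, x ∈ S i) ∧
  ∀ i : Fin l, ∃ a : Fin d, S i = {x : Fin d | ∃ k : ℕ, (α ^ k) a = x}

/-- The permutation `(1 2)(3 4 5)(6 7 8 9 10)` of `{1,…,10}`, written 0-indexed
on `Fin 10` as `(0 1)(2 3 4)(5 6 7 8 9)`. -/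
def alpha10 : Equiv.Perm (Fin 10) :=
  ([0, 1] : List (Fin 10)).formPerm * ([2, 3, 4] : List (Fin 10)).formPerm *
    ([5, 6, 7, 8, 9] : List (Fin 10)).formPerm

/-!
Let a nontrivial block `B` meet the support of a cycle `σ ∈ G` of prime length, say at `x`, and let
`y ∈ B` be another point. Either `σ` fixes `y`, or some power of `σ` maps `x` to `y` and generates
`⟨σ⟩`; in both cases `σ` stabilizes `B`, so `B` contains the support of `σ`.

A proper block has at most half of the points. Hence, for the 5-cycle `σ = α ^ 6` on ten points, a
nontrivial proper block that meets the support equals it, and one that misses the support has a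
translate that meets it, so has five points and is the complement.
-/

open MulAction Equiv
open scoped Pointwise

theorem IsBlockFor.isBlock {d : ℕ} {G : Subgroup (Perm (Fin d))} {A : Set (Fin d)}
    (hA : IsBlockFor G A) : IsBlock G A :=
  isBlock_iff_smul_eq_or_disjoint.2 fun g ↦
    (hA g g.2).imp_right Set.disjoint_iff_inter_eq_empty.2

theorem IsTransitiveSub.isPretransitive {d : ℕ} {G : Subgroup (Perm (Fin d))}
    (hG : IsTransitiveSub G) : IsPretransitive G (Fin d) where
  exists_smul_eq x y :=
    let ⟨g, hg, hgxy⟩ := hG x y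
    ⟨⟨g, hg⟩, hgxy⟩

section PrimeCycle

variable {X : Type*} {G : Subgroup (Perm X)} {σ : Perm X} {B : Set X}

theorem exists_zpow_apply_eq_and_mem_zpowers_zpow (hσ : σ.IsCycle) (hprime : (orderOf σ).Prime)
    {x y : X} (hx : σ x ≠ x) (hy : σ y ≠ y) (hxy : x ≠ y) :
    ∃ k : ℤ, (σ ^ k) x = y ∧ σ ∈ Subgroup.zpowers (σ ^ k) := by
  obtain ⟨k, hk⟩ := hσ.exists_zpow_eq hx hy
  have hnot_dvd : ¬ (orderOf σ : ℤ) ∣ k := fun hdvd ↦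
    hxy (by rw [← hk, orderOf_dvd_iff_zpow_eq_one.1 hdvd, Perm.one_apply])
  exact ⟨k, hk, mem_zpowers_zpow_iff.2 <| Int.isCoprime_iff_gcd_eq_one.1
    ((Nat.prime_iff_prime_int.1 hprime).coprime_iff_not_dvd.2 hnot_dvd).symm⟩

theorem mem_stabilizer_of_isCycle_of_prime_orderOf (hB : IsBlock G B) (hσG : σ ∈ G)
    (hσ : σ.IsCycle) (hprime : (orderOf σ).Prime) (hnontriv : B.Nontrivial)
    {x : X} (hxB : x ∈ B) (hx : σ x ≠ x) : (⟨σ, hσG⟩ : G) ∈ stabilizer G B := by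
  obtain ⟨y, hyB, hyx⟩ := hnontriv.exists_ne x
  by_cases hy : σ y = y
  · exact hB.stabilizer_le hyB hy
  · obtain ⟨k, hk, hgen⟩ := exists_zpow_apply_eq_and_mem_zpowers_zpow hσ hprime hx hy hyx.symm
    have hstab_zpow : (⟨σ, hσG⟩ : G) ^ k ∈ stabilizer G B :=
      isBlock_iff_smul_eq_of_mem.1 hB hxB (hk.symm ▸ hyB : (σ ^ k) x ∈ B)
    obtain ⟨m, hm⟩ := hgen
    have hσ_eq : ((⟨σ, hσG⟩ : G) ^ k) ^ m = ⟨σ, hσG⟩ := Subtype.ext hm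
    exact hσ_eq ▸ zpow_mem hstab_zpow m

theorem setOf_apply_ne_subset_of_isCycle_of_prime_orderOf (hB : IsBlock G B) (hσG : σ ∈ G)
    (hσ : σ.IsCycle) (hprime : (orderOf σ).Prime) (hnontriv : B.Nontrivial)
    {x : X} (hxB : x ∈ B) (hx : σ x ≠ x) : {y | σ y ≠ y} ⊆ B := by
  intro y hy
  have hstab := mem_stabilizer_of_isCycle_of_prime_orderOf hB hσG hσ hprime hnontriv hxB hx
  obtain ⟨k, rfl⟩ := hσ.exists_zpow_eq hx hy
  have hstab_zpow : (⟨σ, hσG⟩ : G) ^ k • B = B := zpow_mem hstab k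
  exact hstab_zpow ▸ Set.smul_mem_smul_set (a := (⟨σ, hσG⟩ : G) ^ k) hxB

theorem blocks_of_example_ten_general [Fintype X] [DecidableEq X] [IsPretransitive G X]
    (hσG : σ ∈ G) (hσ : σ.IsCycle) (hprime : σ.support.card.Prime)
    (hcard : Fintype.card X ≤ 2 * σ.support.card)
    (hB : IsBlock G B) (hnontriv : B.Nontrivial) (hne : B ≠ Set.univ) :
    B = σ.support ∨ B = (σ.support : Set X)ᶜ := by
  have hsmall : B.ncard * 2 ≤ Fintype.card X := by
    rw [← Nat.card_eq_fintype_card]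
    exact not_lt.1 fun hlt ↦ hne (hB.eq_univ_of_card_lt hlt)
  have hsubset {C : Set X} (hC : IsBlock G C) (hC_nontriv : C.Nontrivial) {x : X} (hxC : x ∈ C)
      (hx : x ∈ σ.support) : (σ.support : Set X) ⊆ C := by
    rw [Perm.coe_support_eq_set_support]
    exact setOf_apply_ne_subset_of_isCycle_of_prime_orderOf hC hσG hσ (hσ.orderOf ▸ hprime)
      hC_nontriv hxC (Perm.mem_support.1 hx)
  by_cases hmeet : ∃ x ∈ B, x ∈ σ.support
  · obtain ⟨x, hxB, hx⟩ := hmeet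
    refine .inl (Set.eq_of_subset_of_ncard_le (hsubset hB hnontriv hxB hx) ?_).symm
    rw [Set.ncard_coe_finset]
    lia
  · obtain ⟨a, ha⟩ := hnontriv.nonempty
    obtain ⟨x, hx⟩ := hσ.nonempty_support
    obtain ⟨g, rfl⟩ := exists_smul_eq G a x
    have hsupport_le : σ.support.card ≤ B.ncard := by
      have hsub := hsubset (hB.translate g) (hnontriv.image (MulAction.injective g))
        (Set.smul_mem_smul_set ha) hx
      simpa only [Set.ncard_coe_finset, Set.ncard_smul_set] using Set.ncard_le_ncard hsub
    refine .inr (Set.eq_of_subset_of_ncard_le (fun y hyB hy ↦ hmeet ⟨y, hyB, hy⟩) ?_)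
    rw [← Finset.coe_compl, Set.ncard_coe_finset, Finset.card_compl]
    lia

end PrimeCycle

theorem alpha10_pow_six : alpha10 ^ 6 = ([5, 6, 7, 8, 9] : List (Fin 10)).formPerm := by
  let τ : Perm (Fin 10) := [0, 1].formPerm
  let ρ : Perm (Fin 10) := [2, 3, 4].formPerm
  let γ : Perm (Fin 10) := [5, 6, 7, 8, 9].formPerm
  have hτρ : τ.Disjoint ρ := show ∀ x, τ x = x ∨ ρ x = x by decide
  have hτργ : (τ * ρ).Disjoint γ := show ∀ x, (τ * ρ) x = x ∨ γ x = x by decide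
  have hτ : τ ^ 2 = 1 := List.formPerm_pow_length_eq_one_of_nodup (l := [0, 1]) (by decide)
  have hρ : ρ ^ 3 = 1 := List.formPerm_pow_length_eq_one_of_nodup (l := [2, 3, 4]) (by decide)
  have hγ : γ ^ 5 = 1 :=
    List.formPerm_pow_length_eq_one_of_nodup (l := [5, 6, 7, 8, 9]) (by decide)
  calc (τ * ρ * γ) ^ 6 = (τ ^ 2) ^ 3 * (ρ ^ 3) ^ 2 * (γ ^ 5 * γ) := by
        rw [hτργ.commute.mul_pow, hτρ.commute.mul_pow, ← pow_mul, ← pow_mul, ← pow_succ]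
    _ = γ := by rw [hτ, hρ, hγ, one_pow, one_pow, one_mul, one_mul, one_mul]

theorem isCycle_alpha10_pow_six : (alpha10 ^ 6).IsCycle := by
  rw [alpha10_pow_six]
  exact List.isCycle_formPerm (by decide) (by decide)

theorem support_alpha10_pow_six : (alpha10 ^ 6).support = {5, 6, 7, 8, 9} := by
  rw [alpha10_pow_six]
  decide

theorem blocks_of_example_ten (G : Subgroup (Equiv.Perm (Fin 10)))
    (hG : IsTransitiveSub G) (hα : alpha10 ∈ G)
    (A : Set (Fin 10)) (hA : IsBlockFor G A)
    (h2 : 2 ≤ A.ncard) (h9 : A.ncard ≤ 9) :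
    A = ({0, 1, 2, 3, 4} : Set (Fin 10)) ∨ A = ({5, 6, 7, 8, 9} : Set (Fin 10)) := by
  have := hG.isPretransitive
  have hnontriv : A.Nontrivial := Set.one_lt_ncard_iff_nontrivial.1 h2
  have hne : A ≠ Set.univ := by
    rintro rfl
    simp at h9
  have hcompl : (({5, 6, 7, 8, 9} : Set (Fin 10))ᶜ) = {0, 1, 2, 3, 4} := by
    ext x
    fin_cases x <;> simp
  simpa [support_alpha10_pow_six, hcompl, or_comm] using
    blocks_of_example_ten_general (pow_mem hα 6) isCycle_alpha10_pow_six
      (by rw [support_alpha10_pow_six]; decide) (by rw [support_alpha10_pow_six]; decide)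
      hA.isBlock hnontriv hne
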